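/- n! recursive evaluation algorithms for (p,q)-Bézier curves: let n ≥ 1, let p, q be reals with 0 < q < p, let d ≥ 1, let P_0, …, P_n ∈ ℝ^d, and let σ be a permutation of {1, …, n}. Fix a real t and define P_i^0 = P_i for i = 0, …, n, and P_i^{k+1} = (1 − t p^{i+1−σ(k+1)} q^{σ(k+1)−1−i}) P_i^k + t p^{i+1−σ(k+1)} q^{σ(k+1)−1−i} P_{i+1}^k for k = 0, …, n−1 and i = 0, …, n−k−1. Then P_0^n = Σ_{i=0}^{n} P_i B_i^n(t;p,q). In particular, each of the n! permutations σ yields an affine-invariant recursive evaluation algorithm for the (p,q)-Bézier curve with control points P_0, …, P_n. -/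

import Mathlib

/-- The (p,q)-integer `[n]_{p,q} = Σ_{j=0}^{n-1} p^{n-1-j} q^j`. -/
noncomputable def pqInt (p q : ℝ) (n : ℕ) : ℝ :=
  ∑ j ∈ Finset.range n, p ^ (n - 1 - j) * q ^ j

/-- The (p,q)-factorial `[n]_{p,q}! = ∏_{j=1}^{n} [j]_{p,q}`. -/
noncomputable def pqFact (p q : ℝ) : ℕ → ℝ
  | 0 => 1
  | n + 1 => pqFact p q n * pqInt p q (n + 1)

/-- The (p,q)-binomial coefficient `[n choose k]_{p,q}`. -/
noncomputable def pqBinom (p q : ℝ) (n k : ℕ) : ℝ :=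
  pqFact p q n / (pqFact p q k * pqFact p q (n - k))

/-- The (p,q)-Bernstein basis function
`B_k^n(t;p,q) = p^{k(k-1)/2 - n(n-1)/2} [n choose k]_{p,q} t^k ∏_{s=0}^{n-k-1} (p^s - q^s t)`. -/
noncomputable def pqBernstein (p q : ℝ) (n k : ℕ) (t : ℝ) : ℝ :=
  p ^ (k * (k - 1) / 2) / p ^ (n * (n - 1) / 2) * pqBinom p q n k * t ^ k *
    ∏ s ∈ Finset.range (n - k), (p ^ s - q ^ s * t)

/-!
With `r = q / p`, the weights of the `k`-th step are `t * r ^ (σ(k+1) - 1 - i)`, so that step is the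
operator `1 + t * r ^ (σ(k+1) - 1) • D` with `(D f) i = r ^ (-i) • (f (i + 1) - f i)`. Since `D` does
not depend on `k`, all the steps are polynomials in `D` and commute, and the result is the same for
every `σ`. For the increasing order, one induction on the degree suffices: the last factor splits
each Bernstein function of degree `m` into multiples of two neighbouring ones of degree `m + 1`, and
the two contributions to `B_k^{m+1}` have coefficients `p ^ k [m + 1 - k] / [m + 1]` and
`q ^ (m + 1 - k) [k] / [m + 1]`, whose sum is `1`.
-/

section WeightedDiff

open Polynomial fwdDiff

variable {R E : Type*} [CommRing R] [AddCommGroup E] [Module R E]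

/-- The forward difference of a sequence, multiplied at the index `i` by the weight `w i`. It
generates the recursive evaluation algorithms whose weights factor into a step-dependent part and
the index-dependent part `w`. -/
def weightedDiff (w : ℕ → R) : Module.End R (ℕ → E) where
  toFun f i := w i • Δ_[1] f i
  map_add' f g := by
    funext i
    simp only [fwdDiff_add, Pi.add_apply, smul_add]
  map_smul' a f := by
    funext i
    simp only [fwdDiff_const_smul, Pi.smul_apply, RingHom.id_apply, smul_comm a]

theorem weightedDiff_apply (w : ℕ → R) (f : ℕ → E) (i : ℕ) :
    weightedDiff w f i = w i • (f (i + 1) - f i) := rfl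

theorem aeval_weightedDiff_one_add_C_mul_X (w : ℕ → R) (c : R) (f : ℕ → E) (i : ℕ) :
    aeval (weightedDiff w) (1 + C c * X) f i =
      (1 - c * w i) • f i + (c * w i) • f (i + 1) := by
  simp only [map_add, map_one, map_mul, aeval_C, aeval_X, LinearMap.add_apply,
    Module.End.one_apply, Module.End.mul_apply, Module.algebraMap_end_apply, Pi.add_apply,
    Pi.smul_apply, weightedDiff_apply]
  module

theorem eq_aeval_weightedDiff_of_recursion {w : ℕ → R} {m N : ℕ} {c : Fin m → R}
    {f : ℕ → E} {P : ℕ → ℕ → E} (hP0 : ∀ i ≤ N, P 0 i = f i)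
    (hP : ∀ (k : Fin m) (i : ℕ), i + k < N →
      P (k + 1) i = (1 - c k * w i) • P k i + (c k * w i) • P k (i + 1))
    {i : ℕ} (hi : i + m ≤ N) :
    P m i = aeval (weightedDiff w) (∏ k, (1 + C (c k) * X)) f i := by
  induction m generalizing i with
  | zero => simpa using hP0 i hi
  | succ m ih =>
    have ih' {j : ℕ} (hj : j + m ≤ N) := ih (c := fun k ↦ c k.castSucc)
      (fun k ↦ hP k.castSucc) hj
    have hlast := hP (Fin.last m) i hi
    rw [Fin.val_last] at hlast
    rw [hlast, ih' (by lia), ih' (by lia), Fin.prod_univ_castSucc,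
      mul_comm (Finset.prod _ _), map_mul, Module.End.mul_apply,
      aeval_weightedDiff_one_add_C_mul_X]

end WeightedDiff

section PQIntegers

variable {p q : ℝ}

theorem pqInt_zero (p q : ℝ) : pqInt p q 0 = 0 := rfl

theorem pqInt_succ_pos (hp : 0 < p) (hq : 0 < q) (n : ℕ) : 0 < pqInt p q (n + 1) :=
  Finset.sum_pos (fun _ _ ↦ by positivity) Finset.nonempty_range_add_one

theorem pqInt_add (p q : ℝ) (k l : ℕ) :
    pqInt p q (k + l) = p ^ k * pqInt p q l + q ^ l * pqInt p q k := by
  simp only [pqInt]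
  rw [add_comm k l, Finset.sum_range_add, Finset.mul_sum, Finset.mul_sum]
  congr 1
  · refine Finset.sum_congr rfl fun j hj ↦ ?_
    have hexp : l + k - 1 - j = k + (l - 1 - j) := by
      have := Finset.mem_range.mp hj
      lia
    rw [hexp, pow_add, mul_assoc]
  · refine Finset.sum_congr rfl fun j _ ↦ ?_
    have hexp : l + k - 1 - (l + j) = k - 1 - j := by lia
    rw [hexp, pow_add, mul_left_comm]

theorem pqFact_succ (p q : ℝ) (n : ℕ) :
    pqFact p q (n + 1) = pqFact p q n * pqInt p q (n + 1) := rfl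

theorem pqFact_eq_prod (p q : ℝ) (n : ℕ) :
    pqFact p q n = ∏ j ∈ Finset.range n, pqInt p q (j + 1) := by
  induction n with
  | zero => rfl
  | succ n ih => rw [pqFact_succ, ih, Finset.prod_range_succ]

theorem pqFact_pos (hp : 0 < p) (hq : 0 < q) (n : ℕ) : 0 < pqFact p q n := by
  rw [pqFact_eq_prod]
  exact Finset.prod_pos fun j _ ↦ pqInt_succ_pos hp hq j

theorem pqInt_succ_ne_zero {n k : ℕ} (hn : pqFact p q n ≠ 0) (hk : k < n) :
    pqInt p q (k + 1) ≠ 0 := by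
  rw [pqFact_eq_prod, Finset.prod_ne_zero_iff] at hn
  exact hn k (Finset.mem_range.mpr hk)

theorem pqInt_mul_pqBinom_succ_left {l : ℕ} (hl : pqInt p q (l + 1) ≠ 0) (k : ℕ) :
    pqInt p q (l + 1) * pqBinom p q (k + l + 1) k =
      pqInt p q (k + l + 1) * pqBinom p q (k + l) k := by
  have hsub : k + l + 1 - k = l + 1 := by lia
  rw [pqBinom, pqBinom, hsub, Nat.add_sub_cancel_left, pqFact_succ, pqFact_succ]
  field_simp

theorem pqInt_mul_pqBinom_succ_succ {k : ℕ} (hk : pqInt p q (k + 1) ≠ 0) (l : ℕ) :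
    pqInt p q (k + 1) * pqBinom p q (k + l + 1) (k + 1) =
      pqInt p q (k + l + 1) * pqBinom p q (k + l) k := by
  have hsub : k + l + 1 - (k + 1) = l := by lia
  rw [pqBinom, pqBinom, hsub, Nat.add_sub_cancel_left, pqFact_succ, pqFact_succ]
  field_simp

end PQIntegers

section Bernstein

variable {p q : ℝ}

theorem pqInt_mul_one_sub_mul_pqBernstein {l : ℕ} (hp : p ≠ 0) (hl : pqInt p q (l + 1) ≠ 0)
    (k : ℕ) (t : ℝ) :
    pqInt p q (k + l + 1) * ((1 - t * (q / p) ^ l) * pqBernstein p q (k + l) k t) =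
      p ^ k * pqInt p q (l + 1) * pqBernstein p q (k + l + 1) k t := by
  have hbinom := pqInt_mul_pqBinom_succ_left hl k
  have hfactor : p ^ l - q ^ l * t = p ^ l * (1 - t * (q / p) ^ l) := by
    rw [div_pow]
    field_simp
  have hsub : k + l + 1 - k = l + 1 := by lia
  rw [pqBernstein, pqBernstein, hsub, Nat.add_sub_cancel_left, Finset.prod_range_succ, hfactor,
    Nat.triangle_succ, pow_add p _ (k + l), pow_add p k l]
  generalize ∏ s ∈ Finset.range l, (p ^ s - q ^ s * t) = Z
  generalize (q / p) ^ l = u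
  field_simp
  linear_combination -t ^ k * (1 - t * u) * Z * hbinom

theorem pqInt_mul_mul_pqBernstein {k : ℕ} (hp : p ≠ 0) (hk : pqInt p q (k + 1) ≠ 0)
    (l : ℕ) (t : ℝ) :
    pqInt p q (k + l + 1) * (t * (q / p) ^ l * pqBernstein p q (k + l) k t) =
      q ^ l * pqInt p q (k + 1) * pqBernstein p q (k + l + 1) (k + 1) t := by
  have hbinom := pqInt_mul_pqBinom_succ_succ hk l
  have hsub : k + l + 1 - (k + 1) = l := by lia
  rw [pqBernstein, pqBernstein, hsub, Nat.add_sub_cancel_left, Nat.triangle_succ,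
    Nat.triangle_succ, pow_add p _ (k + l), pow_add p _ k, pow_add p k l, div_pow]
  generalize ∏ s ∈ Finset.range l, (p ^ s - q ^ s * t) = Z
  field_simp
  linear_combination -t ^ (k + 1) * q ^ l * Z * hbinom

variable {E : Type*} [AddCommGroup E] [Module ℝ E]

theorem pqInt_smul_pqBernstein_smul_interpolate {m k : ℕ} (hp : p ≠ 0)
    (hm : pqFact p q (m + 1) ≠ 0) (hk : k ≤ m) (t : ℝ) (x y : E) :
    pqInt p q (m + 1) • pqBernstein p q m k t •
        ((1 - t * (q / p) ^ (m - k)) • x + (t * (q / p) ^ (m - k)) • y) =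
      (p ^ k * pqInt p q (m + 1 - k) * pqBernstein p q (m + 1) k t) • x +
        (q ^ (m - k) * pqInt p q (k + 1) * pqBernstein p q (m + 1) (k + 1) t) • y := by
  obtain ⟨l, rfl⟩ := Nat.exists_eq_add_of_le hk
  have hleft := pqInt_mul_one_sub_mul_pqBernstein hp
    (pqInt_succ_ne_zero hm (k := l) (by lia)) k t
  have hright := pqInt_mul_mul_pqBernstein hp
    (pqInt_succ_ne_zero hm (k := k) (by lia)) l t
  have hsub : k + l + 1 - k = l + 1 := by lia
  rw [hsub, Nat.add_sub_cancel_left, ← hleft, ← hright]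
  module

theorem sum_pqBernstein_smul_interpolate {m : ℕ} (hp : p ≠ 0) (hm : pqFact p q (m + 1) ≠ 0)
    (t : ℝ) (f : ℕ → E) :
    ∑ k ∈ Finset.range (m + 1), pqBernstein p q m k t •
        ((1 - t * (q / p) ^ (m - k)) • f k + (t * (q / p) ^ (m - k)) • f (k + 1)) =
      ∑ k ∈ Finset.range (m + 2), pqBernstein p q (m + 1) k t • f k := by
  let B (k : ℕ) := pqBernstein p q (m + 1) k t
  apply smul_right_injective E (pqInt_succ_ne_zero hm m.lt_succ_self)
  calc pqInt p q (m + 1) • ∑ k ∈ Finset.range (m + 1), pqBernstein p q m k t •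
        ((1 - t * (q / p) ^ (m - k)) • f k + (t * (q / p) ^ (m - k)) • f (k + 1))
    _ = ∑ k ∈ Finset.range (m + 1), (p ^ k * pqInt p q (m + 1 - k) * B k) • f k +
          ∑ k ∈ Finset.range (m + 1),
            (q ^ (m - k) * pqInt p q (k + 1) * B (k + 1)) • f (k + 1) := by
      rw [Finset.smul_sum, ← Finset.sum_add_distrib]
      exact Finset.sum_congr rfl fun k hk ↦ pqInt_smul_pqBernstein_smul_interpolate hp hm
        (Finset.mem_range_succ_iff.mp hk) t (f k) (f (k + 1))
    _ = ∑ k ∈ Finset.range (m + 2), (p ^ k * pqInt p q (m + 1 - k) * B k) • f k +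
          ∑ k ∈ Finset.range (m + 2), (q ^ (m + 1 - k) * pqInt p q k * B k) • f k := by
      rw [Finset.sum_range_succ _ (m + 1), Finset.sum_range_succ' _ (m + 1)]
      simp [pqInt_zero]
    _ = pqInt p q (m + 1) • ∑ k ∈ Finset.range (m + 2), B k • f k := by
      rw [Finset.smul_sum, ← Finset.sum_add_distrib]
      refine Finset.sum_congr rfl fun k hk ↦ ?_
      have hadd := pqInt_add p q k (m + 1 - k)
      rw [Nat.add_sub_cancel' (Finset.mem_range_succ_iff.mp hk)] at hadd
      rw [hadd]
      module

open Polynomial in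
theorem aeval_weightedDiff_prod_eq_sum_pqBernstein {m : ℕ} (hp : p ≠ 0) (hq : q ≠ 0)
    (hm : pqFact p q m ≠ 0) (t : ℝ) (f : ℕ → E) :
    aeval (weightedDiff fun i ↦ ((q / p) ^ i)⁻¹)
        (∏ s ∈ Finset.range m, (1 + C (t * (q / p) ^ s) * X)) f 0 =
      ∑ k ∈ Finset.range (m + 1), pqBernstein p q m k t • f k := by
  induction m generalizing f with
  | zero => simp [pqBernstein, pqBinom, pqFact]
  | succ m ih =>
    rw [Finset.prod_range_succ, map_mul, Module.End.mul_apply,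
      ih (left_ne_zero_of_mul (pqFact_succ p q m ▸ hm)),
      ← sum_pqBernstein_smul_interpolate hp hm]
    refine Finset.sum_congr rfl fun k hk ↦ ?_
    rw [aeval_weightedDiff_one_add_C_mul_X, mul_assoc,
      ← pow_sub₀ _ (div_ne_zero hq hp) (Finset.mem_range_succ_iff.mp hk)]

end Bernstein

theorem zpow_mul_zpow_eq_div_pow_mul_inv {G : Type*} [CommGroupWithZero G] {p q : G}
    (hp : p ≠ 0) (hq : q ≠ 0) (i s : ℕ) :
    p ^ ((i : ℤ) - s) * q ^ ((s : ℤ) - i) = (q / p) ^ s * ((q / p) ^ i)⁻¹ := by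
  rw [zpow_sub₀ hp, zpow_sub₀ hq]
  simp only [zpow_natCast, div_pow]
  field_simp

theorem pq_bezier_factorial_algorithms_general {E : Type*} [AddCommGroup E] [Module ℝ E]
    (n : ℕ) (p q : ℝ) (hp : p ≠ 0) (hq : q ≠ 0) (hfact : pqFact p q n ≠ 0)
    (P : ℕ → E) (σ : Equiv.Perm (Fin n)) (t : ℝ) (P' : ℕ → ℕ → E)
    (hP0 : ∀ i ≤ n, P' 0 i = P i)
    (hPrec : ∀ k, (hk : k < n) → ∀ i, i ≤ n - k - 1 →
      P' (k + 1) i =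
        (1 - t * p ^ ((i : ℤ) - (σ ⟨k, hk⟩ : ℕ)) * q ^ (((σ ⟨k, hk⟩ : ℕ) : ℤ) - i)) • P' k i +
          (t * p ^ ((i : ℤ) - (σ ⟨k, hk⟩ : ℕ)) * q ^ (((σ ⟨k, hk⟩ : ℕ) : ℤ) - i)) •
            P' k (i + 1)) :
    P' n 0 = ∑ i ∈ Finset.range (n + 1), pqBernstein p q n i t • P i := by
  have hstep (k : Fin n) (i : ℕ) (hi : i + k < n) :
      P' (k + 1) i =
        (1 - t * (q / p) ^ (σ k : ℕ) * ((q / p) ^ i)⁻¹) • P' k i +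
          (t * (q / p) ^ (σ k : ℕ) * ((q / p) ^ i)⁻¹) • P' k (i + 1) := by
    rw [hPrec k k.isLt i (by lia), mul_assoc t, mul_assoc t,
      zpow_mul_zpow_eq_div_pow_mul_inv hp hq]
  rw [eq_aeval_weightedDiff_of_recursion (w := fun i ↦ ((q / p) ^ i)⁻¹)
      (c := fun k ↦ t * (q / p) ^ (σ k : ℕ)) hP0 hstep (zero_add n).le,
    Equiv.prod_comp σ fun s : Fin n ↦
      1 + Polynomial.C (t * (q / p) ^ (s : ℕ)) * Polynomial.X,
    ← Finset.prod_range fun s ↦ 1 + Polynomial.C (t * (q / p) ^ s) * Polynomial.X,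
    aeval_weightedDiff_prod_eq_sum_pqBernstein hp hq hfact]

/-- `n!` recursive evaluation algorithms for (p,q)-Bézier curves.  For each
permutation `σ` of `{1, …, n}` (encoded as `σ : Equiv.Perm (Fin n)` with
`σ(k+1) - 1 = σ ⟨k, _⟩`), the recursion
`P_i^{k+1} = (1 - t p^{i+1-σ(k+1)} q^{σ(k+1)-1-i}) P_i^k + t p^{i+1-σ(k+1)} q^{σ(k+1)-1-i} P_{i+1}^k`
starting from `P_i^0 = P_i` computes `P_0^n = Σ_{i=0}^{n} P_i B_i^n(t;p,q)`. -/
theorem pq_bezier_factorial_algorithms (n d : ℕ) (hn : 1 ≤ n) (hd : 1 ≤ d)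
    (p q : ℝ) (h0 : 0 < q) (hqp : q < p)
    (P : ℕ → Fin d → ℝ) (σ : Equiv.Perm (Fin n)) (t : ℝ)
    (P' : ℕ → ℕ → Fin d → ℝ)
    (hP0 : ∀ i ≤ n, P' 0 i = P i)
    (hPrec : ∀ k, (hk : k < n) → ∀ i, i ≤ n - k - 1 →
      P' (k + 1) i =
        (1 - t * p ^ ((i : ℤ) - ((σ ⟨k, hk⟩ : Fin n) : ℕ)) *
              q ^ ((((σ ⟨k, hk⟩ : Fin n) : ℕ) : ℤ) - (i : ℤ))) • P' k i +
          (t * p ^ ((i : ℤ) - ((σ ⟨k, hk⟩ : Fin n) : ℕ)) *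
              q ^ ((((σ ⟨k, hk⟩ : Fin n) : ℕ) : ℤ) - (i : ℤ))) • P' k (i + 1)) :
    P' n 0 = ∑ i ∈ Finset.range (n + 1), pqBernstein p q n i t • P i :=
  have hp : 0 < p := h0.trans hqp
  pq_bezier_factorial_algorithms_general n p q hp.ne' h0.ne' (pqFact_pos hp h0 n).ne'
    P σ t P' hP0 hPrec
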